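/- arXiv:1711.07029 — 4 statements merged into one kernel-verified Lean document; each statement's English description precedes it below -/
import Mathlib

section
/- For all integers n ≥ 2 and k with n + 1 ≤ k ≤ 2n − 1, there exists a universal cycle for the set of 1-2 augmented onto words of length k over Fin n, i.e., words w : Fin k → Fin n in which every letter a ∈ Fin n occurs at least once and at most twice. -/
/- The finite set of words of length `k` over a finite alphabet `A`
satisfying a predicate `P`. -/
open Classical in
noncomputable def wordsOf {A : Type*} [Fintype A] {k : ℕ} (P : (Fin k → A) → Prop) :
    Finset (Fin k → A) :=
  Finset.univ.filter P

/-- A nonempty finite set `S` of words of length `k` over `A` admits a universal cycle: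
a function `c : ZMod S.card → A` such that `i ↦ (fun j => c (i + j))` is a bijection
from `ZMod S.card` onto `S`. -/
def HasUCycle {A : Type*} {k : ℕ} (S : Finset (Fin k → A)) : Prop :=
  ∃ c : ZMod S.card → A,
    Set.BijOn (fun i : ZMod S.card => fun j : Fin k => c (i + (j.val : ZMod S.card)))
      Set.univ ↑S

namespace UC

/-- number of occurrences -/
def cnt {k n : ℕ} (w : Fin k → Fin n) (a : Fin n) : ℕ :=
  (Finset.univ.filter fun i => w i = a).card

def Good {k n : ℕ} (w : Fin k → Fin n) : Prop := ∀ a, 1 ≤ cnt w a ∧ cnt w a ≤ 2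

lemma cnt_eq {k n : ℕ} (w : Fin k → Fin n) (a : Fin n) :
    cnt w a = ∑ i, if w i = a then 1 else 0 := by
  simp [cnt]

lemma cnt_update {k n : ℕ} (w : Fin k → Fin n) (p : Fin k) (b c : Fin n) :
    cnt (Function.update w p b) c + (if w p = c then 1 else 0)
      = cnt w c + (if b = c then 1 else 0) := by
  rw [cnt_eq, cnt_eq, ← Finset.add_sum_erase _ _ (Finset.mem_univ p),
    ← Finset.add_sum_erase Finset.univ (fun i => if w i = c then 1 else 0) (Finset.mem_univ p)]
  have : ∑ x ∈ Finset.univ.erase p, (if Function.update w p b x = c then 1 else 0)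
      = ∑ x ∈ Finset.univ.erase p, (if w x = c then 1 else 0) := by
    apply Finset.sum_congr rfl
    intro x hx
    rw [Function.update_of_ne (Finset.ne_of_mem_erase hx)]
  rw [this]
  simp only [Function.update_self]
  ring

lemma sum_cnt {k n : ℕ} (w : Fin k → Fin n) : ∑ a, cnt w a = k := by
  have := Finset.card_eq_sum_card_fiberwise (f := w) (s := Finset.univ) (t := Finset.univ)
    (fun _ _ => by simp)
  simpa [cnt] using this.symm

def Closed {k n : ℕ} (O : Set (Fin k → Fin n)) : Prop :=
  ∀ w ∈ O, ∀ p b, Good (Function.update w p b) → Function.update w p b ∈ O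

lemma good_move {k n : ℕ} {w : Fin k → Fin n} (hw : Good w) {p : Fin k} {b : Fin n}
    (h2 : cnt w (w p) = 2) (h1 : cnt w b = 1) : Good (Function.update w p b) := by
  intro c
  have h := cnt_update w p b c
  have hc := hw c
  by_cases e1 : w p = c
  · subst e1
    by_cases e2 : b = w p
    · rw [e2] at h1; omega
    · simp [e2] at h; omega
  · by_cases e2 : b = c
    · subst e2; simp [e1] at h; omega
    · simp [e1, e2] at h; omega

lemma cnt_pos {k n : ℕ} {w : Fin k → Fin n} {a : Fin n} (h : 1 ≤ cnt w a) : ∃ i, w i = a := by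
  obtain ⟨i, hi⟩ := Finset.card_pos.1 h
  exact ⟨i, by simpa using hi⟩

lemma exists_double {k n : ℕ} (h1 : n + 1 ≤ k) {w : Fin k → Fin n} (hw : Good w) :
    ∃ a, cnt w a = 2 := by
  by_contra! h
  have : ∑ a, cnt w a ≤ ∑ a : Fin n, 1 := Finset.sum_le_sum fun a _ => by
    have := hw a; have := h a; omega
  rw [sum_cnt] at this
  simp at this; omega

lemma exists_single {k n : ℕ} (h1 : k < 2 * n) {w : Fin k → Fin n} (hw : Good w) :
    ∃ a, cnt w a = 1 := by
  by_contra! h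
  have : ∑ a : Fin n, 2 ≤ ∑ a, cnt w a := Finset.sum_le_sum fun a _ => by
    have := hw a; have := h a; omega
  rw [sum_cnt] at this
  simp at this; omega

lemma swap_ds {k n : ℕ} {O : Set (Fin k → Fin n)} (hO : Closed O)
    {w : Fin k → Fin n} (hw : Good w) (hwO : w ∈ O) (p q : Fin k)
    (hp : cnt w (w p) = 2) (hq : cnt w (w q) = 1) :
    w ∘ Equiv.swap p q ∈ O := by
  have hne : w p ≠ w q := fun h => by rw [h] at hp; omega
  have hpq : p ≠ q := fun h => hne (by rw [h])
  have g1 := good_move hw hp hq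
  have o1 := hO _ hwO _ _ g1
  have g2 : Good (Function.update (Function.update w p (w q)) q (w p)) := by
    apply good_move g1
    · rw [Function.update_of_ne hpq.symm]
      have := cnt_update w p (w q) (w q)
      simp [hne] at this; omega
    · have := cnt_update w p (w q) (w p)
      simp [hne.symm] at this; omega
  have o2 := hO _ o1 _ _ g2
  convert o2 using 1
  ext i
  simp only [Function.comp, Equiv.swap_apply_def, Function.update_apply]
  split_ifs <;> simp_all

lemma swap_mem {k n : ℕ} (h1 : n + 1 ≤ k) (h2 : k < 2 * n) {O : Set (Fin k → Fin n)}
    (hO : Closed O) {w : Fin k → Fin n} (hw : Good w) (hwO : w ∈ O) (p q : Fin k) :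
    w ∘ Equiv.swap p q ∈ O := by
  by_cases hne : w p = w q
  · convert hwO using 1
    ext i
    simp only [Function.comp, Equiv.swap_apply_def]
    split_ifs <;> simp_all
  have hpq : p ≠ q := fun h => hne (by rw [h])
  have hp := hw (w p)
  have hq := hw (w q)
  by_cases cp : cnt w (w p) = 2
  · by_cases cq : cnt w (w q) = 2
    · obtain ⟨b, hb⟩ := exists_single h2 hw
      have hbp : b ≠ w p := fun h => by rw [h] at hb; omega
      have hbq : b ≠ w q := fun h => by rw [h] at hb; omega
      have g1 := good_move hw cp hb
      have o1 := hO _ hwO _ _ g1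
      have e1 := cnt_update w p b
      set w1 := Function.update w p b with hw1
      have w1q : w1 q = w q := Function.update_of_ne hpq.symm _ _
      have w1p : w1 p = b := Function.update_self _ _ _
      have g2 : Good (Function.update w1 q (w p)) := by
        apply good_move g1
        · have := e1 (w q); simp [hne, hbq] at this; rw [w1q]; omega
        · have := e1 (w p); simp [hbp] at this; omega
      have o2 := hO _ o1 _ _ g2
      have e2 := cnt_update w1 q (w p)
      set w2 := Function.update w1 q (w p) with hw2
      have w2p : w2 p = b := by rw [hw2, Function.update_of_ne hpq, w1p]
      have g3 : Good (Function.update w2 p (w q)) := by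
        apply good_move g2
        · have a1 := e1 b; have a2 := e2 b
          simp [hbp.symm, hbq.symm, w1q] at a1 a2; rw [w2p]; omega
        · have a1 := e1 (w q); have a2 := e2 (w q)
          simp [hne, hbq, w1q] at a1 a2; omega
      have o3 := hO _ o2 _ _ g3
      convert o3 using 1
      ext i
      simp only [Function.comp, Equiv.swap_apply_def, Function.update_apply, hw2, hw1]
      split_ifs <;> simp_all
    · exact swap_ds hO hw hwO p q cp (by omega)
  · by_cases cq : cnt w (w q) = 2
    · rw [Equiv.swap_comm]
      exact swap_ds hO hw hwO q p cq (by omega)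
    · replace cp : cnt w (w p) = 1 := by omega
      replace cq : cnt w (w q) = 1 := by omega
      obtain ⟨a, ha⟩ := exists_double h1 hw
      obtain ⟨h, rfl⟩ := cnt_pos (w := w) (a := a) (by omega)
      have hap : w h ≠ w p := fun h => by rw [h] at ha; omega
      have haq : w h ≠ w q := fun h => by rw [h] at ha; omega
      have hhp : h ≠ p := fun h => hap (by rw [h])
      have hhq : h ≠ q := fun h => haq (by rw [h])
      have g1 := good_move hw ha cp
      have o1 := hO _ hwO _ _ g1
      have e1 := cnt_update w h (w p)
      set w1 := Function.update w h (w p) with hw1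
      have w1p : w1 p = w p := Function.update_of_ne hhp.symm _ _
      have w1q : w1 q = w q := Function.update_of_ne hhq.symm _ _
      have w1h : w1 h = w p := Function.update_self _ _ _
      have g2 : Good (Function.update w1 p (w q)) := by
        apply good_move g1
        · have := e1 (w p); simp [hap] at this; rw [w1p]; omega
        · have := e1 (w q); simp [haq, hne] at this; omega
      have o2 := hO _ o1 _ _ g2
      have e2 := cnt_update w1 p (w q)
      set w2 := Function.update w1 p (w q) with hw2
      have w2q : w2 q = w q := by rw [hw2, Function.update_of_ne hpq.symm, w1q]
      have w2h : w2 h = w p := by rw [hw2, Function.update_of_ne hhp, w1h]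
      have hne' : w q ≠ w p := fun h => hne h.symm
      have g3 : Good (Function.update w2 q (w p)) := by
        apply good_move g2
        · have a1 := e1 (w q); have a2 := e2 (w q)
          simp [hne, haq, w1p] at a1 a2; rw [w2q]; omega
        · have a1 := e1 (w p); have a2 := e2 (w p)
          simp [hne', hap, w1p] at a1 a2; omega
      have o3 := hO _ o2 _ _ g3
      have e3 := cnt_update w2 q (w p)
      set w3 := Function.update w2 q (w p) with hw3
      have w3h : w3 h = w p := by rw [hw3, Function.update_of_ne hhq, w2h]
      have g4 : Good (Function.update w3 h (w h)) := by
        apply good_move g3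
        · have a1 := e1 (w p); have a2 := e2 (w p); have a3 := e3 (w p)
          simp [hne', hap, w1p, w2q] at a1 a2 a3; rw [w3h]; omega
        · have a1 := e1 (w h); have a2 := e2 (w h); have a3 := e3 (w h)
          simp [hap.symm, haq.symm, w1p, w2q] at a1 a2 a3; omega
      have o4 := hO _ o3 _ _ g4
      convert o4 using 1
      ext i
      simp only [Function.comp, Equiv.swap_apply_def, Function.update_apply, hw3, hw2, hw1]
      split_ifs <;> simp_all

lemma cnt_swap {k n : ℕ} (w : Fin k → Fin n) (e : Equiv.Perm (Fin k)) (a : Fin n) :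
    cnt (w ∘ e) a = cnt w a := by
  rw [cnt_eq, cnt_eq]
  exact Equiv.sum_comp e (fun i => if w i = a then 1 else 0)

lemma good_comp {k n : ℕ} {w : Fin k → Fin n} (hw : Good w) (e : Equiv.Perm (Fin k)) :
    Good (w ∘ e) := fun a => by rw [cnt_swap]; exact hw a

def dis {k n : ℕ} (w t : Fin k → Fin n) : Finset (Fin k) :=
  Finset.univ.filter fun i => w i ≠ t i

lemma mem_dis {k n : ℕ} (w t : Fin k → Fin n) (i : Fin k) : i ∈ dis w t ↔ w i ≠ t i := by
  simp [dis]

lemma connected {k n : ℕ} (h1 : n + 1 ≤ k) (h2 : k < 2 * n) {O : Set (Fin k → Fin n)}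
    (hO : Closed O) {t : Fin k → Fin n} (ht : Good t) (N : ℕ) :
    ∀ w : Fin k → Fin n, Good w → w ∈ O → (dis w t).card ≤ N → t ∈ O := by
  induction N with
  | zero =>
    intro w hw hwO hd
    have : dis w t = ∅ := by simpa using hd
    have : w = t := by
      ext i
      have h : i ∉ dis w t := by simp [this]
      simp [dis] at h
      rw [h]
    exact this ▸ hwO
  | succ N ih =>
    intro w hw hwO hd
    by_cases hwt : w = t
    · exact hwt ▸ hwO
    obtain ⟨p, hp⟩ := Function.ne_iff.1 hwt
    by_cases hq : ∃ q, w q = t p ∧ t q ≠ t p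
    · obtain ⟨q, hq1, hq2⟩ := hq
      refine ih _ (good_comp hw (Equiv.swap p q)) (swap_mem h1 h2 hO hw hwO p q) ?_
      have : dis (w ∘ Equiv.swap p q) t ⊂ dis w t := by
        rw [Finset.ssubset_iff_of_subset]
        · exact ⟨p, by simpa [dis] using hp, by simpa [dis] using hq1⟩
        · intro i
          rw [mem_dis, mem_dis]
          simp only [Function.comp, Equiv.swap_apply_def]
          split_ifs with e1 e2
          · subst e1; intro _; exact hp
          · subst e2; intro _; rw [hq1]; exact hq2.symm
          · exact id
      have := Finset.card_lt_card this
      omega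
    · push Not at hq
      have hlt : cnt w (t p) < cnt t (t p) := by
        apply Finset.card_lt_card
        rw [Finset.ssubset_iff_of_subset]
        · exact ⟨p, by simp, by simpa using hp⟩
        · intro i; simpa using hq i
      obtain ⟨a, ha⟩ : ∃ a, cnt t a < cnt w a := by
        by_contra! h
        have := Finset.sum_lt_sum (s := Finset.univ) (fun a _ => h a) ⟨t p, by simp, hlt⟩
        rw [sum_cnt, sum_cnt] at this
        omega
      obtain ⟨h, hh1, hh2⟩ : ∃ h, w h = a ∧ t h ≠ a := by
        by_contra! h
        have : cnt w a ≤ cnt t a := Finset.card_le_card fun i => by simpa using h i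
        omega
      subst hh1
      have A := hw (w h); have B := ht (w h); have C := hw (t p); have D := ht (t p)
      have g1 := good_move hw (p := h) (b := t p) (by omega) (by omega)
      have o1 := hO _ hwO _ _ g1
      refine ih _ (good_comp g1 (Equiv.swap p h)) (swap_mem h1 h2 hO g1 o1 p h) ?_
      have : dis (Function.update w h (t p) ∘ Equiv.swap p h) t ⊂ dis w t := by
        rw [Finset.ssubset_iff_of_subset]
        · exact ⟨p, by simpa [dis] using hp, by simp [dis]⟩
        · intro i
          rw [mem_dis, mem_dis]
          simp only [Function.comp, Equiv.swap_apply_def]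
          split_ifs with e1 e2
          · subst e1; intro _; exact hp
          · subst e2; intro _; exact hh2.symm
          · rw [Function.update_of_ne e2]; exact id
      have := Finset.card_lt_card this
      omega

/-- merging cycles -/
lemma merge {W : Type*} [Finite W] [DecidableEq W] (σ : Equiv.Perm W) {w w' : W}
    (h : ¬ σ.SameCycle w w') :
    (σ * Equiv.swap w w').SameCycle w w' ∧
      ∀ u v, σ.SameCycle u v → (σ * Equiv.swap w w').SameCycle u v := by
  set τ := σ * Equiv.swap w w' with hτ
  have τw : τ w = σ w' := by simp [hτ]
  have τw' : τ w' = σ w := by simp [hτ]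
  have τu : ∀ u, u ≠ w → u ≠ w' → τ u = σ u := fun u a b => by
    simp [hτ, Equiv.swap_apply_of_ne_of_ne a b]
  have key : τ.SameCycle w w' := by
    by_contra hn
    have : ∀ i : ℕ, τ.SameCycle w ((σ ^ (i + 1)) w') := by
      intro i
      induction i with
      | zero =>
        simp only [zero_add, pow_one, ← τw]
        exact Equiv.Perm.sameCycle_apply_right.2 (Equiv.Perm.SameCycle.refl _ _)
      | succ i ih =>
        rw [pow_succ', Equiv.Perm.mul_apply, ← τu]
        · exact Equiv.Perm.sameCycle_apply_right.2 ih
        · intro e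
          apply h
          rw [Equiv.Perm.sameCycle_comm]
          exact ⟨((i + 1 : ℕ) : ℤ), by rw [zpow_natCast]; exact e⟩
        · intro e
          rw [e] at ih
          exact hn ih
    have h2 := this (orderOf σ - 1)
    rw [Nat.sub_add_cancel (orderOf_pos σ), pow_orderOf_eq_one] at h2
    exact hn h2
  refine ⟨key, ?_⟩
  have step : ∀ u, τ.SameCycle u (σ u) := by
    intro u
    by_cases e1 : u = w
    · subst e1
      rw [← τw', Equiv.Perm.sameCycle_apply_right]; exact key
    · by_cases e2 : u = w'
      · subst e2
        rw [← τw, Equiv.Perm.sameCycle_apply_right]; exact key.symm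
      · rw [← τu u e1 e2, Equiv.Perm.sameCycle_apply_right]
  intro u v huv
  obtain ⟨i, rfl⟩ := huv.exists_nat_pow_eq
  induction i with
  | zero => simp; rfl
  | succ i ih =>
    rw [pow_succ', Equiv.Perm.mul_apply]
    exact (ih ⟨i, by simp⟩).trans (step _)

section main
variable {m n : ℕ}

abbrev W (m n : ℕ) := {w : Fin (m + 1) → Fin n // Good w}

def Compat (σ : Equiv.Perm (W m n)) : Prop :=
  ∀ w : W m n, ∀ j : Fin m, (σ w).1 j.castSucc = w.1 j.succ

def rot : Equiv.Perm (W m n) where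
  toFun w := ⟨w.1 ∘ finRotate (m + 1), good_comp w.2 _⟩
  invFun w := ⟨w.1 ∘ (finRotate (m + 1)).symm, good_comp w.2 _⟩
  left_inv w := by ext; simp
  right_inv w := by ext; simp

lemma rot_compat : Compat (rot : Equiv.Perm (W m n)) := by
  intro w j
  simp [rot]

open Classical in
lemma exists_max (w0 : W m n) : ∃ σ : Equiv.Perm (W m n), Compat σ ∧
    ∀ w w' : W m n, σ.SameCycle w0 w → (∀ j : Fin m, w.1 j.succ = w'.1 j.succ) →
      σ.SameCycle w0 w' := by
  let f : Equiv.Perm (W m n) → ℕ := fun σ => (Finset.univ.filter fun w => σ.SameCycle w0 w).card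
  obtain ⟨σ, hσ, hmax⟩ := Finset.exists_max_image
    (Finset.univ.filter fun σ : Equiv.Perm (W m n) => Compat σ) f ⟨rot, by simp [rot_compat]⟩
  simp only [Finset.mem_filter, Finset.mem_univ, true_and] at hσ hmax
  refine ⟨σ, hσ, fun w w' hw ht => ?_⟩
  by_contra hn
  obtain ⟨a, b⟩ := merge σ (w := w) (w' := w') fun h => hn (hw.trans h)
  have := hmax (σ * Equiv.swap w w') (by
    intro u j
    rw [Equiv.Perm.mul_apply, hσ, Equiv.swap_apply_def]
    split_ifs with e1 e2
    · rw [e1, ht]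
    · rw [e2, ht]
    · rfl)
  have h2 : f σ < f (σ * Equiv.swap w w') := by
    apply Finset.card_lt_card
    rw [Finset.ssubset_iff_of_subset]
    · exact ⟨w', by simpa using (b _ _ hw).trans a, by simpa using hn⟩
    · intro u; simpa using b _ _
  omega

lemma exists_trans (h1 : n + 1 ≤ m + 1) (h2 : m + 1 < 2 * n) (w0 : W m n) :
    ∃ σ : Equiv.Perm (W m n), Compat σ ∧ ∀ w, σ.SameCycle w0 w := by
  obtain ⟨σ, hσ, hc⟩ := exists_max w0
  refine ⟨σ, hσ, ?_⟩
  have hrot : ∀ w, σ.SameCycle w0 w → σ.SameCycle w0 (rot w) := by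
    intro w hw
    have : σ.SameCycle w0 (σ.symm (rot w)) := by
      apply hc w _ hw
      intro j
      rw [← rot_compat w, ← hσ, Equiv.apply_symm_apply]
    have := Equiv.Perm.sameCycle_apply_right.2 this
    rwa [Equiv.apply_symm_apply] at this
  have hrotn : ∀ i : ℕ, ∀ w, σ.SameCycle w0 w → σ.SameCycle w0 ((rot ^ i) w) := by
    intro i
    induction i with
    | zero => intro w hw; simpa using hw
    | succ i ih => intro w hw; rw [pow_succ', Equiv.Perm.mul_apply]; exact hrot _ (ih w hw)
  have hrotv : ∀ i : ℕ, ∀ w : W m n, ((rot ^ i) w).1 = w.1 ∘ (finRotate (m+1) ^ i : Equiv.Perm _) := by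
    intro i
    induction i with
    | zero => intro w; rfl
    | succ i ih =>
      intro w
      rw [pow_succ, Equiv.Perm.mul_apply, ih, pow_succ']
      rfl
  let O : Set (Fin (m+1) → Fin n) := {w | ∃ h : Good w, σ.SameCycle w0 ⟨w, h⟩}
  have hO : Closed O := by
    rintro w ⟨hw, hs⟩ p b hg
    refine ⟨hg, ?_⟩
    have hp : ∃ i : ℕ, (finRotate (m+1) ^ i : Equiv.Perm _) 0 = p := by
      refine ⟨p.val, ?_⟩
      have : ∀ i : ℕ, (finRotate (m+1) ^ i : Equiv.Perm _) 0 = Fin.ofNat (m+1) i := by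
        intro i
        induction i with
        | zero => simp
        | succ i ih =>
          rw [pow_succ', Equiv.Perm.mul_apply, ih]
          simp [Fin.ext_iff, Fin.val_add]
      rw [this]; simp
    obtain ⟨i, hi⟩ := hp
    have A := hrotn i _ hs
    have B : σ.SameCycle w0 ((rot ^ i) ⟨_, hg⟩) := by
      apply hc _ _ A
      intro j
      rw [hrotv, hrotv]
      simp only [Function.comp]
      rw [Function.update_of_ne]
      rw [← hi]
      intro e
      exact Fin.succ_ne_zero j (Equiv.injective _ e)
    have C := hrotn (orderOf (rot : Equiv.Perm (W m n)) * i - i) _ B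
    rw [← Equiv.Perm.mul_apply, ← pow_add, Nat.sub_add_cancel, pow_mul, pow_orderOf_eq_one,
      one_pow] at C
    · exact C
    · exact Nat.le_mul_of_pos_left _ (orderOf_pos _)
  intro w
  obtain ⟨_, h⟩ := connected h1 h2 hO w.2 _ w0.1 w0.2 ⟨w0.2, Equiv.Perm.SameCycle.refl _ _⟩ le_rfl
  exact h

end main

lemma exists_good {k n : ℕ} (h1 : n + 1 ≤ k) (h2 : k < 2 * n) : ∃ w : Fin k → Fin n, Good w := by
  have hn : 0 < n := by omega
  refine ⟨fun i => ⟨i.val % n, Nat.mod_lt _ hn⟩, fun a => ⟨?_, ?_⟩⟩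
  · apply Finset.card_pos.2
    refine ⟨⟨a.val, by omega⟩, ?_⟩
    simp [Fin.ext_iff, Nat.mod_eq_of_lt a.2]
  · have : (Finset.univ.filter fun i : Fin k => (⟨i.val % n, Nat.mod_lt _ hn⟩ : Fin n) = a).card
        ≤ ({a.val, a.val + n} : Finset ℕ).card := by
      apply Finset.card_le_card_of_injOn (fun i => i.val)
      · intro i hi
        have hi : i.val % n = a.val := by simpa [Fin.ext_iff] using hi
        have h3 : i.val < 2 * n := by omega
        have h4 := Nat.mod_add_div i.val n
        have h5 : i.val / n < 2 := (Nat.div_lt_iff_lt_mul hn).2 h3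
        have h6 : i.val / n = 0 ∨ i.val / n = 1 := by
          generalize i.val / n = q at h5
          omega
        simp only [Finset.coe_insert, Finset.coe_singleton, Set.mem_insert_iff,
          Set.mem_singleton_iff]
        rcases h6 with h6 | h6 <;> rw [h6] at h4 <;> omega
      · intro i _ j _ h; exact Fin.ext h
    exact this.trans Finset.card_le_two

end UC

open UC in
theorem ucycle_one_two_augmented_onto (n k : ℕ) (hn : 2 ≤ n)
    (h1 : n + 1 ≤ k) (h2 : k ≤ 2 * n - 1) :
    HasUCycle (wordsOf (fun w : Fin k → Fin n =>
      ∀ a : Fin n, 1 ≤ (Finset.univ.filter fun i => w i = a).card ∧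
        (Finset.univ.filter fun i => w i = a).card ≤ 2)) := by
  classical
  have h2' : k < 2 * n := by omega
  obtain ⟨w0, hw0⟩ := exists_good h1 h2'
  obtain ⟨m, rfl⟩ : ∃ m, k = m + 1 := ⟨k - 1, by omega⟩
  obtain ⟨σ, hσ, hs⟩ := exists_trans h1 h2' ⟨w0, hw0⟩
  change HasUCycle (wordsOf (Good : (Fin (m+1) → Fin n) → Prop))
  set S := wordsOf (Good : (Fin (m+1) → Fin n) → Prop) with hS
  have memS : ∀ w, w ∈ S ↔ Good w := fun w => by simp [hS, wordsOf]
  have hcard : (Finset.univ : Finset (W m n)).card = S.card := by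
    rw [Finset.card_univ, Fintype.card_subtype, hS, wordsOf]
  have : NeZero S.card := ⟨Finset.card_ne_zero_of_mem ((memS w0).2 hw0)⟩
  have cyc : σ.IsCycleOn (Finset.univ : Finset (W m n)) := by
    refine ⟨by simp, fun x _ y _ => (hs x).symm.trans (hs y)⟩
  have hpow : ∀ a b : ℕ, (σ ^ a) ⟨w0, hw0⟩ = (σ ^ b) ⟨w0, hw0⟩ ↔ a ≡ b [MOD S.card] := by
    intro a b
    rw [← hcard]
    exact cyc.pow_apply_eq_pow_apply (Finset.mem_univ _)
  have hcoord : ∀ j : ℕ, ∀ hj : j < m + 1, ∀ u : W m n, u.1 ⟨j, hj⟩ = ((σ ^ j) u).1 0 := by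
    intro j
    induction j with
    | zero => intro hj u; rfl
    | succ j ih =>
      intro hj u
      rw [pow_succ, Equiv.Perm.mul_apply, ← ih (by omega)]
      exact (hσ u ⟨j, by omega⟩).symm
  have hval : ∀ i : ZMod S.card, (fun j : Fin (m+1) =>
      ((σ ^ (i + (j.val : ZMod S.card)).val) ⟨w0, hw0⟩).1 0) = ((σ ^ i.val) ⟨w0, hw0⟩).1 := by
    intro i
    ext j
    rw [hcoord j.val j.2 ((σ ^ i.val) ⟨w0, hw0⟩), ← Equiv.Perm.mul_apply, ← pow_add,
      (hpow _ (j.val + i.val)).2]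
    rw [← ZMod.natCast_eq_natCast_iff]
    simp [add_comm]
  refine ⟨fun i => ((σ ^ i.val) ⟨w0, hw0⟩).1 0, ?_, ?_, ?_⟩
  · intro i _
    simp only [hval]
    exact (memS _).2 (Subtype.property _)
  · intro i _ j _ h
    simp only [hval] at h
    have := (hpow _ _).1 (Subtype.ext h)
    rw [← ZMod.natCast_eq_natCast_iff] at this
    simpa using this
  · intro w hw
    obtain ⟨a, ha⟩ := (hs ⟨w, (memS w).1 hw⟩).exists_nat_pow_eq
    refine ⟨(a : ZMod S.card), Set.mem_univ _, ?_⟩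
    simp only [hval]
    rw [(hpow _ a).2, ha]
    rw [← ZMod.natCast_eq_natCast_iff]
    simp
end

section
/- Let a, b, n, k be integers with 1 ≤ a < b, n ≥ 1, and a·n + 1 ≤ k ≤ b·n − 1. Then there exists a universal cycle for the set of a-b augmented onto words of length k over Fin n, i.e., words w : Fin k → Fin n in which every letter a' ∈ Fin n occurs at least a times and at most b times. -/
namespace UCyc

open Classical in
noncomputable def cnt {k n : ℕ} (w : Fin k → Fin n) (x : Fin n) : ℕ :=
  (Finset.univ.filter fun i => w i = x).card

open Classical in
theorem cnt_update {k n : ℕ} (w : Fin k → Fin n) (i : Fin k) (y z : Fin n) :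
    cnt (Function.update w i y) z + (if w i = z then 1 else 0)
      = cnt w z + (if y = z then 1 else 0) := by
  unfold cnt
  rw [Finset.card_filter, Finset.card_filter,
    ← Finset.add_sum_erase _ _ (Finset.mem_univ i),
    ← Finset.add_sum_erase Finset.univ (fun j => if w j = z then 1 else 0) (Finset.mem_univ i)]
  have : ∑ x ∈ Finset.univ.erase i, (if Function.update w i y x = z then 1 else 0)
      = ∑ x ∈ Finset.univ.erase i, (if w x = z then 1 else 0) := by
    apply Finset.sum_congr rfl
    intro x hx
    rw [Function.update_of_ne (Finset.ne_of_mem_erase hx)]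
  rw [this]
  simp only [Function.update_self]
  ring

theorem sum_cnt {k n : ℕ} (w : Fin k → Fin n) : ∑ x, cnt w x = k := by
  classical
  have := Finset.card_eq_sum_card_fiberwise (f := w) (s := Finset.univ) (t := Finset.univ)
    (fun _ _ => Finset.mem_coe.2 (Finset.mem_univ _))
  rw [Finset.card_univ, Fintype.card_fin] at this
  conv_rhs => rw [this]
  apply Finset.sum_congr rfl
  intro x _
  unfold cnt
  congr

def Good {k n : ℕ} (a b : ℕ) (w : Fin k → Fin n) : Prop := ∀ x, a ≤ cnt w x ∧ cnt w x ≤ b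

theorem exists_gt {a n k : ℕ} (h1 : a * n + 1 ≤ k) (w : Fin k → Fin n) : ∃ x, a < cnt w x := by
  by_contra! h
  have := Finset.sum_le_sum (fun x (_ : x ∈ Finset.univ) => h x)
  rw [sum_cnt] at this
  simp at this
  linarith [mul_comm a n]

theorem exists_lt {b n k : ℕ} (h2 : k + 1 ≤ b * n) (w : Fin k → Fin n) : ∃ x, cnt w x < b := by
  by_contra! h
  have := Finset.sum_le_sum (fun x (_ : x ∈ Finset.univ) => h x)
  rw [sum_cnt] at this
  simp at this
  linarith [mul_comm b n]

theorem exists_pos {n k : ℕ} (w : Fin k → Fin n) (x : Fin n) (h : 0 < cnt w x) : ∃ i, w i = x := by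
  unfold cnt at h
  obtain ⟨i, hi⟩ := Finset.card_pos.1 h
  exact ⟨i, by simpa using hi⟩

theorem good_update {a b n k : ℕ} {w : Fin k → Fin n} (hw : Good a b w) (i : Fin k) (y : Fin n)
    (h : w i = y ∨ a < cnt w (w i) ∧ cnt w y < b) : Good a b (Function.update w i y) := by
  intro z
  have h1 := cnt_update w i y z
  have h2 := hw z
  rcases h with h | h
  · subst h
    omega
  · split_ifs at h1 with h3 h4 h4
    · omega
    · subst h3; omega
    · subst h4; omega
    · omega

section conn
variable {a b n k : ℕ} (T : Set (Fin k → Fin n))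

theorem step (hT : ∀ w i y, Good a b w → Good a b (Function.update w i y) → w ∈ T →
      Function.update w i y ∈ T) {w : Fin k → Fin n} (hw : Good a b w ∧ w ∈ T) (i : Fin k) (y : Fin n)
    (h : a < cnt w (w i) ∧ cnt w y < b) :
    Good a b (Function.update w i y) ∧ Function.update w i y ∈ T :=
  ⟨good_update hw.1 i y (Or.inr h), hT _ _ _ hw.1 (good_update hw.1 i y (Or.inr h)) hw.2⟩

theorem swap1 (hT : ∀ w i y, Good a b w → Good a b (Function.update w i y) → w ∈ T →
      Function.update w i y ∈ T) {w : Fin k → Fin n} (hw : Good a b w ∧ w ∈ T) (i j : Fin k)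
    (hij : w i ≠ w j) (h : a < cnt w (w i) ∧ cnt w (w j) < b) :
    Good a b (Function.update (Function.update w i (w j)) j (w i)) ∧
      Function.update (Function.update w i (w j)) j (w i) ∈ T := by
  have hne : j ≠ i := fun h => hij (by rw [h])
  have s1 := step T hT hw i (w j) h
  apply step T hT s1
  rw [Function.update_of_ne hne]
  have c1 := cnt_update w i (w j) (w i)
  have c2 := cnt_update w i (w j) (w j)
  have := hw.1 (w i)
  have := hw.1 (w j)
  rw [if_pos rfl, if_neg hij.symm] at c1
  rw [if_pos rfl, if_neg hij] at c2
  omega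

theorem swap (ha : 1 ≤ a) (hab : a < b) (h1 : a * n + 1 ≤ k) (h2 : k + 1 ≤ b * n)
    (hT : ∀ w i y, Good a b w → Good a b (Function.update w i y) → w ∈ T →
      Function.update w i y ∈ T) {w : Fin k → Fin n} (hw : Good a b w ∧ w ∈ T) (i j : Fin k)
    (hij : w i ≠ w j) :
    Good a b (Function.update (Function.update w i (w j)) j (w i)) ∧
      Function.update (Function.update w i (w j)) j (w i) ∈ T := by
  have hne : j ≠ i := fun h => hij (by rw [h])
  have gi := hw.1 (w i)
  have gj := hw.1 (w j)
  by_cases c1 : a < cnt w (w i) ∧ cnt w (w j) < b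
  · exact swap1 T hT hw i j hij c1
  by_cases c2 : a < cnt w (w j) ∧ cnt w (w i) < b
  · have := swap1 T hT hw j i hij.symm c2
    rwa [Function.update_comm hne] at this
  by_cases c3 : cnt w (w i) = a
  · have c4 : cnt w (w j) = a := by omega
    obtain ⟨u, hu⟩ := exists_gt h1 w
    obtain ⟨l, rfl⟩ := exists_pos w u (by omega)
    have hli : l ≠ i := by rintro rfl; omega
    have hlj : l ≠ j := by rintro rfl; omega
    have hwi : w l ≠ w i := by intro h; rw [h] at hu; omega
    have hwj : w l ≠ w j := by intro h; rw [h] at hu; omega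
    have s1 := step T hT hw l (w i) (by omega)
    have e1 := cnt_update w l (w i) (w i)
    have e2 := cnt_update w l (w i) (w j)
    have e3 := cnt_update w l (w i) (w l)
    rw [if_pos rfl, if_neg hwi] at e1
    rw [if_neg hij, if_neg hwj] at e2
    rw [if_pos rfl, if_neg hwi.symm] at e3
    have s2 := swap1 T hT s1 i j (by
      rwa [Function.update_of_ne hli.symm, Function.update_of_ne hlj.symm]) (by
      rw [Function.update_of_ne hli.symm, Function.update_of_ne hlj.symm]
      omega)
    rw [Function.update_of_ne hli.symm, Function.update_of_ne hlj.symm] at s2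
    have gl := hw.1 (w l)
    have key : Function.update (Function.update (Function.update (Function.update w l (w i)) i (w j)) j (w i)) l (w l)
      = Function.update (Function.update w i (w j)) j (w i) := by
      ext x
      simp only [Function.update_apply]
      grind
    rw [← key]
    apply step T hT s2
    have e4 := cnt_update (Function.update w l (w i)) i (w j)
    have e5 := cnt_update (Function.update (Function.update w l (w i)) i (w j)) j (w i)
    have f1 := e4 (w i)
    have f2 := e4 (w l)
    have f3 := e5 (w i)
    have f4 := e5 (w l)
    simp only [Function.update_apply] at f1 f2 f3 f4 ⊢
    grind
  · have c4 : cnt w (w i) = b ∧ cnt w (w j) = b := by omega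
    obtain ⟨z, hz⟩ := exists_lt h2 w
    have hzi : w i ≠ z := by intro h; rw [← h] at hz; omega
    have hzj : w j ≠ z := by intro h; rw [← h] at hz; omega
    have s1 := step T hT hw i z (by omega)
    have e1 := cnt_update w i z (w i)
    have e2 := cnt_update w i z (w j)
    have e3 := cnt_update w i z z
    rw [if_pos rfl, if_neg hzi.symm] at e1
    rw [if_neg hij, if_neg hzj.symm] at e2
    rw [if_pos rfl, if_neg hzi] at e3
    have s2 := step T hT s1 j (w i) (by
      rw [Function.update_of_ne hne]
      omega)
    have gz := hw.1 z
    have key : Function.update (Function.update (Function.update w i z) j (w i)) i (w j)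
      = Function.update (Function.update w i (w j)) j (w i) := by
      ext x
      simp only [Function.update_apply]
      grind
    rw [← key]
    apply step T hT s2
    have e5 := cnt_update (Function.update w i z) j (w i)
    have f3 := e5 z
    have f4 := e5 (w j)
    simp only [Function.update_apply] at f3 f4 ⊢
    grind

theorem cnt_lt {w t : Fin k → Fin n} (i : Fin k) (y : Fin n) (h1 : t i = y) (h2 : w i ≠ y)
    (h : ∀ j, w j = y → t j = y) : cnt w y < cnt t y := by
  unfold cnt
  apply Finset.card_lt_card
  rw [Finset.ssubset_iff_of_subset]
  · exact ⟨i, by simp [h1], by simp [h2]⟩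
  · intro j
    simpa using h j

theorem conn (ha : 1 ≤ a) (hab : a < b) (h1 : a * n + 1 ≤ k) (h2 : k + 1 ≤ b * n)
    (hT : ∀ w i y, Good a b w → Good a b (Function.update w i y) → w ∈ T →
      Function.update w i y ∈ T) {t : Fin k → Fin n} (ht : Good a b t) :
    ∀ (d : ℕ) (w : Fin k → Fin n), Good a b w ∧ w ∈ T → hammingDist w t = d → t ∈ T := by
  intro d
  induction d using Nat.strong_induction_on with
  | _ d ih =>
  intro w hw hd
  subst hd
  by_cases hwt : w = t
  · exact hwt ▸ hw.2
  obtain ⟨i, hi⟩ := Function.ne_iff.1 hwt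
  have dlt : ∀ w' : Fin k → Fin n, ∀ l, w l ≠ t l → w' l = t l →
      (∀ x, w x = t x → w' x = t x) → hammingDist w' t < hammingDist w t := by
    intro w' l hl hl' hx
    unfold hammingDist
    apply Finset.card_lt_card
    rw [Finset.ssubset_iff_of_subset]
    · exact ⟨l, by simp [hl], by simp [hl']⟩
    · intro j
      simp only [Finset.mem_filter, Finset.mem_univ, true_and]
      exact fun h h' => h (hx j h')
  by_cases hj : ∃ j, w j = t i ∧ t j ≠ t i
  · obtain ⟨j, hj1, hj2⟩ := hj
    have s := swap T ha hab h1 h2 hT hw i j (by rwa [hj1])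
    refine ih _ (dlt _ i hi ?_ ?_) _ s rfl
    · simp only [Function.update_apply]; grind
    · intro x; simp only [Function.update_apply]; grind
  push Not at hj
  have c1 := cnt_lt i (t i) rfl hi hj
  have c2 := ht (t i)
  by_cases hx : a < cnt w (w i)
  · have s := step T hT hw i (t i) (by omega)
    refine ih _ (dlt _ i hi ?_ ?_) _ s rfl
    · simp only [Function.update_apply]; grind
    · intro x; simp only [Function.update_apply]; grind
  by_cases hj2 : ∃ j, t j = w i ∧ w j ≠ w i
  · obtain ⟨j, hj1, hj2⟩ := hj2
    have s := swap T ha hab h1 h2 hT hw i j hj2.symm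
    refine ih _ (dlt _ j (by grind) ?_ ?_) _ s rfl
    · simp only [Function.update_apply]; grind
    · intro x; simp only [Function.update_apply]; grind
  push Not at hj2
  have c3 := cnt_lt (w := t) (t := w) i (w i) rfl hi.symm hj2
  have := ht (w i)
  omega

end conn

theorem exists_good {a b n k : ℕ} (hn : 1 ≤ n) (h1 : a * n + 1 ≤ k) (h2 : k + 1 ≤ b * n) :
    ∃ w : Fin k → Fin n, Good a b w := by
  refine ⟨fun i => ⟨i.val % n, Nat.mod_lt _ hn⟩, fun x => ?_⟩
  have hc : cnt (fun i : Fin k => (⟨i.val % n, Nat.mod_lt _ hn⟩ : Fin n)) x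
      = k.count (fun m => m ≡ x.val [MOD n]) := by
    unfold cnt
    rw [Nat.count_eq_card_filter_range, Finset.card_filter, Finset.card_filter, Finset.sum_range]
    apply Finset.sum_congr rfl
    intro i _
    simp [Fin.ext_iff, Nat.ModEq, Nat.mod_eq_of_lt x.isLt]
  rw [hc, Nat.count_modEq_card k hn]
  have l1 : a ≤ k / n := (Nat.le_div_iff_mul_le hn).2 (by omega)
  have l2 : k / n < b := (Nat.div_lt_iff_lt_mul hn).2 (by omega)
  split_ifs <;> omega

section merge
variable {α : Type*}

theorem merge [Finite α] [DecidableEq α] (σ : Equiv.Perm α) (w w' : α) (h : ¬ σ.SameCycle w w') :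
    (∀ x y, σ.SameCycle x y → (σ * Equiv.swap w w').SameCycle x y) ∧
      (σ * Equiv.swap w w').SameCycle w w' := by
  set τ := σ * Equiv.swap w w' with hτ
  have tw : τ w = σ w' := by simp [hτ]
  have tw' : τ w' = σ w := by simp [hτ]
  have tx : ∀ x, x ≠ w → x ≠ w' → τ x = σ x := by
    intro x h1 h2
    simp [hτ, Equiv.swap_apply_of_ne_of_ne h1 h2]
  have key : τ.SameCycle w w' := by
    by_contra hc
    have : ∀ m : ℕ, τ.SameCycle w ((σ ^ (m + 1)) w') := by
      intro m
      induction m with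
      | zero => simpa [← tw] using Equiv.Perm.SameCycle.refl τ w
      | succ m ih =>
        rw [pow_succ', Equiv.Perm.mul_apply, ← tx]
        · exact Equiv.Perm.sameCycle_apply_right.2 ih
        · intro he
          exact h (Equiv.Perm.SameCycle.symm ⟨(m + 1 : ℕ), by rw [zpow_natCast]; exact he⟩)
        · intro he
          exact hc (he ▸ ih)
    have h3 := this (orderOf σ - 1)
    rw [Nat.sub_add_cancel (orderOf_pos σ), pow_orderOf_eq_one] at h3
    exact hc h3
  refine ⟨?_, key⟩
  have st : ∀ x, τ.SameCycle x (σ x) := by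
    intro x
    by_cases h1 : x = w
    · subst h1
      rw [← tw']
      exact Equiv.Perm.sameCycle_apply_right.2 key
    by_cases h2 : x = w'
    · subst h2
      rw [← tw]
      exact Equiv.Perm.sameCycle_apply_right.2 key.symm
    rw [← tx x h1 h2]
    exact Equiv.Perm.sameCycle_apply_right.2 (Equiv.Perm.SameCycle.refl _ _)
  intro x y hxy
  obtain ⟨m, rfl⟩ := hxy.exists_nat_pow_eq
  induction m with
  | zero => exact Equiv.Perm.SameCycle.refl _ _
  | succ m ih =>
    rw [pow_succ', Equiv.Perm.mul_apply]
    exact (ih ⟨m, by simp⟩).trans (st _)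

end merge

def Valid {A : Type*} {K : ℕ} {S : Finset (Fin (K + 1) → A)} (σ : Equiv.Perm S) : Prop :=
  ∀ (w : S) (j : Fin K), (σ w).1 j.castSucc = w.1 j.succ

theorem exists_max {A : Type*} {K : ℕ} {S : Finset (Fin (K + 1) → A)} (w0 : S)
    (h : ∃ σ : Equiv.Perm S, Valid σ) :
    ∃ σ : Equiv.Perm S, Valid σ ∧ ∀ w w' : S, (∀ j : Fin K, w.1 j.succ = w'.1 j.succ) →
      σ.SameCycle w0 w → σ.SameCycle w0 w' := by
  classical
  obtain ⟨σ, hσ, hmax⟩ := Set.exists_max_image {σ : Equiv.Perm S | Valid σ}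
    (fun σ => (Finset.univ.filter fun x => σ.SameCycle w0 x).card) (Set.toFinite _) h
  refine ⟨σ, hσ, fun w w' hw h0 => ?_⟩
  by_contra hc
  obtain ⟨m1, m2⟩ := merge σ w w' (fun h => hc (h0.trans h))
  have hv : Valid (σ * Equiv.swap w w') := by
    intro x j
    rw [Equiv.Perm.mul_apply, hσ]
    by_cases h1 : x = w
    · subst h1
      rw [Equiv.swap_apply_left, hw]
    by_cases h2 : x = w'
    · subst h2
      rw [Equiv.swap_apply_right, hw]
    rw [Equiv.swap_apply_of_ne_of_ne h1 h2]
  have := hmax _ hv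
  refine absurd this (not_le.2 ?_)
  apply Finset.card_lt_card
  rw [Finset.ssubset_iff_of_subset]
  · exact ⟨w', by simpa using (m1 _ _ h0).trans m2, by simpa using hc⟩
  · intro x
    simpa using m1 w0 x

theorem ucycle_of_perm {A : Type*} {K : ℕ} {S : Finset (Fin (K + 1) → A)} (w0 : S)
    (σ : Equiv.Perm S) (hσ : Valid σ) (hall : ∀ w, σ.SameCycle w0 w) : HasUCycle S := by
  have hcyc : σ.IsCycleOn ((Finset.univ : Finset S) : Set S) := by
    refine ⟨by simpa using σ.bijective.bijOn_univ, fun x _ y _ => (hall x).symm.trans (hall y)⟩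
  have hcard : (Finset.univ : Finset S).card = S.card := by simp
  have : NeZero S.card := ⟨(Finset.card_pos.2 ⟨w0.1, w0.2⟩).ne'⟩
  have hpow : ∀ p q : ℕ, (σ ^ p) w0 = (σ ^ q) w0 ↔ p ≡ q [MOD S.card] := by
    intro p q
    rw [← hcard]
    exact hcyc.pow_apply_eq_pow_apply (Finset.mem_univ _)
  have hwin : ∀ (j : ℕ) (hj : j < K + 1) (w : S), ((σ ^ j) w).1 0 = w.1 ⟨j, hj⟩ := by
    intro j
    induction j with
    | zero => intro _ w; rfl
    | succ j ih =>
      intro hj w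
      rw [pow_succ, Equiv.Perm.mul_apply, ih (by omega)]
      exact hσ w ⟨j, by omega⟩
  refine ⟨fun i => ((σ ^ i.val) w0).1 0, ?_⟩
  have hf : (fun i : ZMod S.card => fun j : Fin (K + 1) =>
      ((σ ^ (i + (j.val : ZMod S.card)).val) w0).1 0) = fun i => ((σ ^ i.val) w0).1 := by
    funext i j
    rw [← hwin j.val j.isLt, ← Equiv.Perm.mul_apply, ← pow_add]
    have e : (σ ^ (i + (j.val : ZMod S.card)).val) w0 = (σ ^ (j.val + i.val)) w0 := by
      rw [hpow, ← ZMod.natCast_eq_natCast_iff]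
      simp [add_comm]
    rw [e]
  change Set.BijOn (fun i : ZMod S.card => fun j : Fin (K + 1) =>
      ((σ ^ (i + (j.val : ZMod S.card)).val) w0).1 0) Set.univ ↑S
  rw [hf]
  refine ⟨fun i _ => ((σ ^ i.val) w0).2, ?_, ?_⟩
  · intro i _ i' _ h
    have h := (hpow _ _).1 (Subtype.ext h)
    rw [← ZMod.natCast_eq_natCast_iff] at h
    simpa using h
  · intro w hw
    obtain ⟨m, hm⟩ := (hall ⟨w, hw⟩).exists_nat_pow_eq
    refine ⟨(m : ZMod S.card), trivial, ?_⟩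
    have : (σ ^ (m : ZMod S.card).val) w0 = (σ ^ m) w0 := by
      rw [hpow, ← ZMod.natCast_eq_natCast_iff]; simp
    simp only [this, hm]

theorem main {a b n K : ℕ} (ha : 1 ≤ a) (hab : a < b) (hn : 1 ≤ n)
    (h1 : a * n + 1 ≤ K + 1) (h2 : K + 1 + 1 ≤ b * n) (S : Finset (Fin (K + 1) → Fin n))
    (hS : ∀ w, w ∈ S ↔ Good a b w) : HasUCycle S := by
  obtain ⟨v0, hv0⟩ := exists_good (k := K + 1) hn h1 h2
  have hrot : ∀ w : Fin (K + 1) → Fin n, w ∈ S ↔ (fun j => w (j + 1)) ∈ S := by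
    intro w
    rw [hS, hS]
    have : ∀ x, cnt (fun j => w (j + 1)) x = cnt w x := by
      intro x
      unfold cnt
      rw [Finset.card_filter, Finset.card_filter]
      exact Equiv.sum_comp (Equiv.addRight (1 : Fin (K + 1))) (fun j => if w j = x then 1 else 0)
    simp only [Good, this]
  let ρ : Equiv.Perm S := Equiv.subtypeEquiv
    (Equiv.arrowCongr (Equiv.addRight (1 : Fin (K + 1))).symm (Equiv.refl (Fin n))) (fun w => hrot w)
  have hρ : ∀ (w : S) j, (ρ w).1 j = w.1 (j + 1) := fun w j => rfl
  have hρv : Valid ρ := fun w j => by rw [hρ, Fin.coeSucc_eq_succ]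
  let w0 : S := ⟨v0, (hS _).2 hv0⟩
  obtain ⟨σ, hσ, hcl⟩ := exists_max w0 ⟨ρ, hρv⟩
  refine ucycle_of_perm w0 σ hσ ?_
  have hr : ∀ w : S, σ.SameCycle w0 w ↔ σ.SameCycle w0 (ρ w) := by
    intro w
    obtain ⟨w', hw'⟩ := σ.surjective (ρ w)
    have e : ∀ j : Fin K, w.1 j.succ = w'.1 j.succ := by
      intro j
      rw [← hσ w', hw', hρv]
    rw [← hw', Equiv.Perm.sameCycle_apply_right]
    exact ⟨hcl _ _ e, hcl _ _ (fun j => (e j).symm)⟩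
  have hpos : ∀ (i : Fin (K + 1)) (w w' : S), (∀ j, j ≠ i → w.1 j = w'.1 j) →
      σ.SameCycle w0 w → σ.SameCycle w0 w' := by
    intro i
    induction i using Fin.induction with
    | zero => exact fun w w' h => hcl w w' (fun j => h _ (Fin.succ_ne_zero j))
    | succ i ih =>
      intro w w' h h0
      rw [hr] at h0 ⊢
      refine ih _ _ ?_ h0
      intro j hj
      rw [hρ, hρ]
      apply h
      intro he
      rw [← Fin.coeSucc_eq_succ] at he
      exact hj (add_right_cancel he)
  intro t
  let T : Set (Fin (K + 1) → Fin n) := {w | ∃ h : w ∈ S, σ.SameCycle w0 ⟨w, h⟩}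
  have hT : ∀ w i y, Good a b w → Good a b (Function.update w i y) → w ∈ T →
      Function.update w i y ∈ T := by
    rintro w i y _ hg ⟨hm, hs⟩
    refine ⟨(hS _).2 hg, hpos i _ _ ?_ hs⟩
    intro j hj
    simp [Function.update_of_ne hj]
  obtain ⟨_, h⟩ := conn T ha hab h1 h2 hT ((hS _).1 t.2) _ v0
    ⟨hv0, (hS _).2 hv0, Equiv.Perm.SameCycle.refl _ _⟩ rfl
  exact h

end UCyc

/-- U-cycles of `a-b` augmented onto words of length `k` over `Fin n` (each letter
occurring at least `a` and at most `b` times) exist whenever `1 ≤ a < b`, `n ≥ 1`, and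
`a * n + 1 ≤ k ≤ b * n - 1`. -/
theorem ucycle_ab_augmented_onto (a b n k : ℕ) (ha : 1 ≤ a) (hab : a < b) (hn : 1 ≤ n)
    (h1 : a * n + 1 ≤ k) (h2 : k ≤ b * n - 1) :
    HasUCycle (wordsOf (fun w : Fin k → Fin n =>
      ∀ x : Fin n, a ≤ (Finset.univ.filter fun i => w i = x).card ∧
        (Finset.univ.filter fun i => w i = x).card ≤ b)) := by
  obtain ⟨K, rfl⟩ : ∃ K, k = K + 1 := ⟨k - 1, by omega⟩
  refine UCyc.main ha hab hn h1 (by omega) _ ?_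
  intro w
  simp only [wordsOf, Finset.mem_filter, Finset.mem_univ, true_and, UCyc.Good, UCyc.cnt]
end

section
/- Fix integers n, k with n ≥ k + 1 ≥ 4 and let D be the transition digraph for three-dimensional lattice paths of length n ending within ℓ¹-distance k of the origin: vertices are words v : Fin (n−1) → Σ with ‖∑_i v(i)‖₁ ≤ k + 1, and there is a directed edge from v to w iff v(j) = w(j−1) for all j with 1 ≤ j ≤ n−2 and the length-n word v(0), …, v(n−2), w(n−2) has letter-sum of ℓ¹ norm ≤ k. Then every vertex of D either has out-degree 6 or admits a directed path in D to a vertex of out-degree 6. -/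
/-- The six unit step vectors `±e₁, ±e₂, ±e₃` in `ℤ³` (encoded as `ℤ × ℤ × ℤ`). -/
def stepSet3 : Finset (ℤ × ℤ × ℤ) :=
  {(1, 0, 0), (-1, 0, 0), (0, 1, 0), (0, -1, 0), (0, 0, 1), (0, 0, -1)}

/-- The ℓ¹ norm on `ℤ³`. -/
def l1 (v : ℤ × ℤ × ℤ) : ℤ := |v.1| + |v.2.1| + |v.2.2|

/-- Vertices of the transition digraph: words of length `n - 1` over the step alphabet
whose letter-sum has ℓ¹ norm at most `k + 1`. -/
def Vert (n k : ℕ) : Type :=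
  {v : Fin (n - 1) → ↥stepSet3 // l1 (∑ i, ((v i : ℤ × ℤ × ℤ))) ≤ (k : ℤ) + 1}

/-- Directed edges of the transition digraph: `w` is obtained from `v` by deleting the
first letter and appending a new last letter, and the concatenated length-`n` word
(`v` followed by the last letter of `w`) has letter-sum of ℓ¹ norm at most `k`. -/
def Edge (n k : ℕ) (hn : 2 ≤ n) (v w : Vert n k) : Prop :=
  (∀ j : Fin (n - 1), ∀ _ : 1 ≤ j.val,
      w.1 ⟨j.val - 1, by have := j.isLt; omega⟩ = v.1 j) ∧
  l1 ((∑ i, (v.1 i : ℤ × ℤ × ℤ)) + (w.1 ⟨n - 2, by omega⟩ : ℤ × ℤ × ℤ)) ≤ (k : ℤ)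

def dot3 (u v : ℤ × ℤ × ℤ) : ℤ := u.1 * v.1 + u.2.1 * v.2.1 + u.2.2 * v.2.2

lemma mem_step {a : ℤ × ℤ × ℤ} (ha : a ∈ stepSet3) : a = (1, 0, 0) ∨ a = (-1, 0, 0) ∨
    a = (0, 1, 0) ∨ a = (0, -1, 0) ∨ a = (0, 0, 1) ∨ a = (0, 0, -1) := by
  simpa [stepSet3] using ha

lemma l1_add_le {S c : ℤ × ℤ × ℤ} (hc : c ∈ stepSet3) : l1 (S + c) ≤ l1 S + 1 := by
  obtain ⟨x, y, z⟩ := S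
  rcases mem_step hc with rfl | rfl | rfl | rfl | rfl | rfl <;> simp [l1] <;> grind

lemma l1_sub_le {S c : ℤ × ℤ × ℤ} (hc : c ∈ stepSet3) : l1 (S - c) ≤ l1 S + 1 := by
  obtain ⟨x, y, z⟩ := S
  rcases mem_step hc with rfl | rfl | rfl | rfl | rfl | rfl <;> simp [l1] <;> grind

lemma l1_sub_lt {S c : ℤ × ℤ × ℤ} (hc : c ∈ stepSet3) (h : 1 ≤ dot3 S c) :
    l1 (S - c) ≤ l1 S - 1 := by
  obtain ⟨x, y, z⟩ := S
  rcases mem_step hc with rfl | rfl | rfl | rfl | rfl | rfl <;> simp [l1, dot3] at * <;> grind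

lemma dot_ne {a c : ℤ × ℤ × ℤ} (ha : a ∈ stepSet3) (hc : c ∈ stepSet3) (h : c ≠ a) :
    dot3 c a ≤ 0 := by
  rcases mem_step hc with rfl | rfl | rfl | rfl | rfl | rfl <;>
  rcases mem_step ha with rfl | rfl | rfl | rfl | rfl | rfl <;> simp [dot3] at *

lemma dot_sub (S c a : ℤ × ℤ × ℤ) : dot3 (S - c) a = dot3 S a - dot3 c a := by
  simp [dot3]; ring

lemma exists_step {S a : ℤ × ℤ × ℤ} (ha : a ∈ stepSet3) (hS : 2 ≤ l1 S) (h : 0 < dot3 S a) :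
    ∃ b ∈ stepSet3, l1 (S + b) ≤ l1 S - 1 ∧ 1 ≤ dot3 (S + b) a := by
  obtain ⟨x, y, z⟩ := S
  by_contra hcon
  push Not at hcon
  have h1 := hcon (1, 0, 0) (by simp [stepSet3])
  have h2 := hcon (-1, 0, 0) (by simp [stepSet3])
  have h3 := hcon (0, 1, 0) (by simp [stepSet3])
  have h4 := hcon (0, -1, 0) (by simp [stepSet3])
  have h5 := hcon (0, 0, 1) (by simp [stepSet3])
  have h6 := hcon (0, 0, -1) (by simp [stepSet3])
  clear hcon
  rcases mem_step ha with rfl | rfl | rfl | rfl | rfl | rfl <;> simp [l1, dot3] at * <;>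
  rcases abs_cases x with hx | hx <;> rcases abs_cases y with hy | hy <;>
  rcases abs_cases z with hz | hz <;> grind

lemma exists_pos {m : ℕ} (v : Fin m → ↥stepSet3)
    (hS : 1 ≤ l1 (∑ i, (v i : ℤ × ℤ × ℤ))) :
    ∃ i, 0 < dot3 (∑ i, (v i : ℤ × ℤ × ℤ)) (v i) := by
  by_contra hcon
  push Not at hcon
  set S := ∑ i, (v i : ℤ × ℤ × ℤ) with hSd
  have h1 : ∑ i, dot3 S (v i) = dot3 S S := by
    have : dot3 S S = dot3 S (∑ i, (v i : ℤ × ℤ × ℤ)) := by rw [← hSd]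
    rw [this]
    simp only [dot3, Prod.fst_sum, Prod.snd_sum, Finset.mul_sum, Finset.sum_add_distrib]
  have h2 : dot3 S S ≤ 0 := by
    rw [← h1]; exact Finset.sum_nonpos fun i _ => hcon i
  obtain ⟨x, y, z⟩ := S
  simp only [dot3, l1] at *
  have hx : x = 0 := by nlinarith [sq_nonneg x, sq_nonneg y, sq_nonneg z]
  have hy : y = 0 := by nlinarith [sq_nonneg x, sq_nonneg y, sq_nonneg z]
  have hz : z = 0 := by nlinarith [sq_nonneg x, sq_nonneg y, sq_nonneg z]
  subst hx hy hz
  simp at hS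

def shiftW {m : ℕ} (v : Fin (m + 1) → ↥stepSet3) (b : ↥stepSet3) : Fin (m + 1) → ↥stepSet3 :=
  Fin.snoc (α := fun _ => ↥stepSet3) (Fin.tail v) b

lemma sum_shiftW {m : ℕ} (v : Fin (m + 1) → ↥stepSet3) (b : ↥stepSet3) :
    ∑ i, (shiftW v b i : ℤ × ℤ × ℤ) = (∑ i, (v i : ℤ × ℤ × ℤ)) + b - v 0 := by
  rw [Fin.sum_univ_castSucc, Fin.sum_univ_succ (fun i => (v i : ℤ × ℤ × ℤ))]
  simp only [shiftW, Fin.tail, Fin.snoc_castSucc, Fin.snoc_last]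
  abel

lemma shiftW_pred {m : ℕ} (v : Fin (m + 1) → ↥stepSet3) (b : ↥stepSet3) (j : ℕ)
    (hj : j + 1 < m + 1) : shiftW v b ⟨j, by omega⟩ = v ⟨j + 1, hj⟩ := by
  have : (⟨j, by omega⟩ : Fin (m + 1)) = Fin.castSucc ⟨j, by omega⟩ := rfl
  rw [this, shiftW, Fin.snoc_castSucc]
  rfl

lemma shiftW_last {m : ℕ} (v : Fin (m + 1) → ↥stepSet3) (b : ↥stepSet3) :
    shiftW v b ⟨m, by omega⟩ = b := by
  have : (⟨m, by omega⟩ : Fin (m + 1)) = Fin.last m := rfl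
  rw [this, shiftW, Fin.snoc_last]

lemma exists_edge {m k : ℕ} (v : Vert (m + 2) k) (b : ↥stepSet3)
    (hb : l1 ((∑ i : Fin (m + 1), (v.1 i : ℤ × ℤ × ℤ)) + b) ≤ k) :
    ∃ w : Vert (m + 2) k, w.1 = shiftW (m := m) v.1 b ∧ Edge (m + 2) k (by omega) v w := by
  refine ⟨⟨shiftW (m := m) v.1 b, ?_⟩, rfl, ?_, ?_⟩
  · have := sum_shiftW (m := m) v.1 b
    have h2 := l1_sub_le (S := (∑ i : Fin (m + 1), (v.1 i : ℤ × ℤ × ℤ)) + b)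
      (v.1 (0 : Fin (m + 1))).2
    rw [← this] at h2
    exact h2.trans (by linarith)
  · rintro ⟨j, hj⟩ h1
    obtain ⟨j, rfl⟩ : ∃ j', j = j' + 1 := ⟨j - 1, by simp at h1; omega⟩
    exact shiftW_pred (m := m) v.1 b j hj
  · have := shiftW_last (m := m) v.1 b
    simp only [Nat.add_sub_cancel]
    erw [this]
    exact hb

lemma outdeg_six {m k : ℕ} (v : Vert (m + 2) k)
    (hv : l1 (∑ i : Fin (m + 1), (v.1 i : ℤ × ℤ × ℤ)) ≤ (k : ℤ) - 1) :
    Nat.card {w : Vert (m + 2) k // Edge (m + 2) k (by omega) v w} = 6 := by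
  have h6 : Nat.card ↥stepSet3 = 6 := by
    rw [Nat.card_eq_fintype_card, Fintype.card_coe]; rfl
  rw [← h6]
  refine Nat.card_congr (Equiv.ofBijective
    (fun w => w.1.1 (⟨m, by omega⟩ : Fin (m + 1))) ⟨?_, ?_⟩)
  · rintro ⟨⟨w, hw⟩, he, _⟩ ⟨⟨w', hw'⟩, he', _⟩ h
    have : w = w' := by
      funext ⟨j, hj⟩
      rcases Nat.lt_or_ge j m with hlt | hge
      · exact (he ⟨j + 1, by omega⟩ (by simp)).trans (he' ⟨j + 1, by omega⟩ (by simp)).symm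
      · obtain rfl : j = m := by omega
        exact h
    subst this
    rfl
  · intro b
    obtain ⟨w, hw, he⟩ := exists_edge v b (by
      have := l1_add_le (S := ∑ i : Fin (m + 1), (v.1 i : ℤ × ℤ × ℤ)) b.2
      linarith)
    refine ⟨⟨w, he⟩, ?_⟩
    change w.1 (⟨m, by omega⟩ : Fin (m + 1)) = b
    rw [hw]
    exact shiftW_last (m := m) v.1 b

lemma reach {m k : ℕ} (hk : 3 ≤ k) (i : ℕ) : ∀ (hi : i < m + 1) (v : Vert (m + 2) k),
    0 < dot3 (∑ i : Fin (m + 1), (v.1 i : ℤ × ℤ × ℤ)) (v.1 (⟨i, hi⟩ : Fin (m + 1))) →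
    ∃ u : Vert (m + 2) k, Relation.ReflTransGen (Edge (m + 2) k (by omega)) v u ∧
      l1 (∑ i : Fin (m + 1), (u.1 i : ℤ × ℤ × ℤ)) ≤ (k : ℤ) - 1 := by
  induction i with
  | zero =>
    intro hi v hd
    by_cases hs : l1 (∑ i : Fin (m + 1), (v.1 i : ℤ × ℤ × ℤ)) ≤ (k : ℤ) - 1
    · exact ⟨v, .refl, hs⟩
    have hv : l1 (∑ i : Fin (m + 1), (v.1 i : ℤ × ℤ × ℤ)) ≤ (k : ℤ) + 1 := v.2
    obtain ⟨b, hb, hl, hdb⟩ := exists_step (v.1 (⟨0, hi⟩ : Fin (m + 1))).2 (by omega) hd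
    obtain ⟨w, hw, he⟩ := exists_edge v ⟨b, hb⟩ (by simp only; omega)
    refine ⟨w, .single he, ?_⟩
    have h1 := l1_sub_lt (v.1 (⟨0, hi⟩ : Fin (m + 1))).2 hdb
    have h2 := sum_shiftW (m := m) v.1 ⟨b, hb⟩
    rw [hw, h2]
    exact h1.trans (by omega)
  | succ i ih =>
    intro hi v hd
    by_cases hs : l1 (∑ i : Fin (m + 1), (v.1 i : ℤ × ℤ × ℤ)) ≤ (k : ℤ) - 1
    · exact ⟨v, .refl, hs⟩
    have hv : l1 (∑ i : Fin (m + 1), (v.1 i : ℤ × ℤ × ℤ)) ≤ (k : ℤ) + 1 := v.2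
    obtain ⟨b, hb, hl, hdb⟩ := exists_step (v.1 (⟨i + 1, hi⟩ : Fin (m + 1))).2 (by omega) hd
    obtain ⟨w, hw, he⟩ := exists_edge v ⟨b, hb⟩ (by simp only; omega)
    have h2 := sum_shiftW (m := m) v.1 ⟨b, hb⟩
    by_cases hc : (v.1 (0 : Fin (m + 1)) : ℤ × ℤ × ℤ) = v.1 (⟨i + 1, hi⟩ : Fin (m + 1))
    · refine ⟨w, .single he, ?_⟩
      have h1 := l1_sub_lt (v.1 (⟨i + 1, hi⟩ : Fin (m + 1))).2 hdb
      rw [hw, h2, hc]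
      exact h1.trans (by omega)
    · have h3 := dot_ne (v.1 (⟨i + 1, hi⟩ : Fin (m + 1))).2 (v.1 (0 : Fin (m + 1))).2 hc
      obtain ⟨u, hu, hul⟩ := ih (by omega) w (by
        rw [hw, h2, shiftW_pred (m := m) v.1 ⟨b, hb⟩ i hi, dot_sub]
        simp only
        omega)
      exact ⟨u, .head he hu, hul⟩

/-- In the transition digraph for three-dimensional lattice paths of length
`n ≥ k + 1 ≥ 4` ending within ℓ¹-distance `k` of the origin, every vertex has
out-degree `6` or admits a directed path to a vertex of out-degree `6`. -/
theorem lattice_digraph_reaches_outdeg_six (n k : ℕ) (hk : 4 ≤ k + 1) (hn : k + 1 ≤ n) :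
    ∀ v : Vert n k,
      Nat.card {w : Vert n k // Edge n k (by omega) v w} = 6 ∨
      ∃ u : Vert n k, Relation.ReflTransGen (Edge n k (by omega)) v u ∧
        Nat.card {w : Vert n k // Edge n k (by omega) u w} = 6 := by
  intro v
  right
  obtain ⟨m, rfl⟩ : ∃ m, n = m + 2 := ⟨n - 2, by omega⟩
  by_cases hs : l1 (∑ i : Fin (m + 1), (v.1 i : ℤ × ℤ × ℤ)) ≤ (k : ℤ) - 1
  · exact ⟨v, .refl, outdeg_six v hs⟩
  obtain ⟨⟨i, hi⟩, hd⟩ := exists_pos (m := m + 1) v.1 (by omega)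
  obtain ⟨u, hu, hul⟩ := reach (by omega) i hi v hd
  exact ⟨u, hu, outdeg_six u hul⟩
end

section
/- For every integer n ≥ 2, there exists a universal cycle for the set of competition rankings of n players, i.e., words w : Fin n → Fin n such that for every j ∈ Fin n, the value of w(j) equals the number of indices i ∈ Fin n with w(i) < w(j) (so, in 1-based terms, each player's rank is 1 plus the number of players ranked strictly better). -/
open Equiv Equiv.Perm in
theorem uc_join {α : Type*} [Finite α] [DecidableEq α] (f : Perm α) (w w' z : α)
    (h : ¬ SameCycle f w w') (hz : SameCycle f w' z) : SameCycle (f * swap w w') w z := by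
  obtain ⟨i, hi0, -, hi⟩ := hz.exists_pow_eq''
  have key : ∀ k : ℕ, SameCycle (f * swap w w') w ((f ^ (k+1)) w') := by
    intro k
    have h1 : SameCycle (f * swap w w') w (f w') := ⟨1, by simp⟩
    induction k with
    | zero => simpa using h1
    | succ k ih =>
      have e : (f ^ (k+1+1)) w' = f ((f ^ (k+1)) w') := by rw [pow_succ' f (k+1)]; rfl
      rw [e]
      have hne : (f ^ (k+1)) w' ≠ w := by
        intro hh
        exact h (SameCycle.symm ⟨(k+1 : ℕ), by rw [zpow_natCast]; exact hh⟩)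
      by_cases hw : (f ^ (k+1)) w' = w'
      · rw [hw]; exact h1
      · refine ih.trans ⟨1, ?_⟩
        simp [swap_apply_of_ne_of_ne hne hw]
  obtain ⟨k, rfl⟩ : ∃ k, i = k + 1 := ⟨i - 1, by omega⟩
  rw [← hi]; exact key k

open Equiv Equiv.Perm in
theorem uc_main {A : Type*} {m : ℕ} (S : Finset (Fin (m+1) → A)) (hS : S.Nonempty)
    (hrot : ∀ w ∈ S, (fun j => w (j+1)) ∈ S)
    (hconn : ∀ T : Set (Fin (m+1) → A),
      (∀ w ∈ S, ∀ w' ∈ S, ∀ a, (∀ i, i ≠ a → w i = w' i) → w ∈ T → w' ∈ T) →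
      ∀ x ∈ S, ∀ y ∈ S, x ∈ T → y ∈ T) : HasUCycle S := by
  classical
  obtain ⟨x, hx⟩ := hS
  let x0 : S := ⟨x, hx⟩
  let C : Perm S → Prop := fun f => ∀ w : S, ∀ i : Fin m, (f w).1 i.castSucc = w.1 i.succ
  -- rotation
  let r0 : S → S := fun w => ⟨fun j => w.1 (j+1), hrot w.1 w.2⟩
  have hr0 : Function.Injective r0 := by
    intro a b hab
    apply Subtype.ext
    funext j
    have := congrFun (congrArg Subtype.val hab) (j - 1)
    simpa [r0] using this
  let r : Perm S := Equiv.ofBijective r0 (Finite.injective_iff_bijective.1 hr0)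
  have hr : C r := by
    intro w i
    show w.1 (i.castSucc + 1) = _
    rw [Fin.coeSucc_eq_succ]
  obtain ⟨f, hf, hmax⟩ := Finset.exists_max_image
    (Finset.univ.filter C) (fun f => (Finset.univ.filter fun z => SameCycle f x0 z).card)
    ⟨r, by simpa using hr⟩
  have hf : C f := by simpa using hf
  have htail : ∀ w w' : S, (∀ i : Fin m, w.1 i.succ = w'.1 i.succ) → SameCycle f x0 w →
      SameCycle f x0 w' := by
    intro w w' hww hw
    by_contra hw'
    have hn : ¬ SameCycle f w w' := fun h => hw' (hw.trans h)
    have hn' : ¬ SameCycle f w' w := fun h => hn h.symm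
    have hC : C (f * swap w w') := by
      intro u i
      rw [Perm.mul_apply, hf]
      by_cases h1 : u = w
      · subst h1; rw [swap_apply_left, hww]
      by_cases h2 : u = w'
      · subst h2; rw [swap_apply_right, hww]
      rw [swap_apply_of_ne_of_ne h1 h2]
    have h1 := uc_join f w w' w' hn (SameCycle.refl _ _)
    have h2 : ∀ z, SameCycle f w z → SameCycle (f * swap w w') w z := by
      intro z hz
      have := uc_join f w' w z hn' hz
      rw [swap_comm] at this
      exact h1.trans this
    have h3 := h2 x0 hw.symm
    have := hmax (f * swap w w') (by simpa using hC)
    refine absurd this (not_le.2 (Finset.card_lt_card ?_))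
    rw [Finset.ssubset_iff_of_subset]
    · refine ⟨w', ?_, ?_⟩
      · simpa using h3.symm.trans h1
      · simpa using hw'
    · intro z hz
      simp only [Finset.mem_filter, Finset.mem_univ, true_and] at hz ⊢
      exact h3.symm.trans (h2 z (hw.symm.trans hz))
  have hrT : ∀ w : S, SameCycle f x0 w → SameCycle f x0 (r w) := by
    intro w hw
    have := htail w (f⁻¹ (r w)) (by
      intro i
      have e1 := hf (f⁻¹ (r w)) i
      rw [show f (f⁻¹ (r w)) = r w from f.apply_symm_apply (r w)] at e1
      rw [← e1, hr]) hw
    have h2 : SameCycle f (f⁻¹ (r w)) (r w) := ⟨1, by simp⟩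
    exact this.trans h2
  have hrf : ∀ a : Fin (m+1), ∀ w : S, SameCycle f x0 w →
      ∃ h : (fun j => w.1 (j + a)) ∈ S, SameCycle f x0 ⟨_, h⟩ := by
    intro a
    induction a using Fin.induction with
    | zero => intro w hw; simpa using hw
    | succ k ih =>
      intro w hw
      obtain ⟨h, h'⟩ := ih w hw
      have := hrT _ h'
      have e : (fun j => w.1 (j + k.succ)) = (r ⟨_, h⟩).1 := by
        funext j
        show _ = w.1 (j + 1 + k.castSucc)
        rw [← Fin.coeSucc_eq_succ, add_right_comm, add_assoc]
      refine ⟨by rw [e]; exact (r ⟨_, h⟩).2, ?_⟩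
      convert this using 1
      exact Subtype.ext e
  have hrS : ∀ a : Fin (m+1), ∀ w ∈ S, (fun j => w (j + a)) ∈ S := by
    intro a w hw
    induction a using Fin.induction with
    | zero => simpa using hw
    | succ k ih =>
      have := hrot _ ih
      convert this using 3
      rw [← Fin.coeSucc_eq_succ, add_right_comm, add_assoc]
  have hall : ∀ y : S, SameCycle f x0 y := by
    have := hconn {w | ∃ h : w ∈ S, SameCycle f x0 ⟨w, h⟩} (by
      rintro w hw w' hw' a haw ⟨hw0, hT⟩
      refine ⟨hw', ?_⟩
      obtain ⟨h1, h2⟩ := hrf a _ hT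
      have h3 := htail _ ⟨_, hrS a w' hw'⟩ (by
        intro i
        apply haw
        intro h
        have : i.succ = 0 := by simpa using h
        exact Fin.succ_ne_zero i this) h2
      obtain ⟨h4, h5⟩ := hrf (-a) _ h3
      simpa using h5) x hx
    intro y
    exact (this y.1 y.2 ⟨hx, SameCycle.refl _ _⟩).2
  have hcyc : f.IsCycleOn ((Finset.univ : Finset S) : Set S) :=
    ⟨by simpa using f.bijective, fun a _ b _ => (hall a).symm.trans (hall b)⟩
  have hcard : (Finset.univ : Finset S).card = S.card := by simp
  have hpos : S.card ≠ 0 := Finset.card_ne_zero_of_mem hx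
  have : NeZero S.card := ⟨hpos⟩
  have hdvd : ∀ k : ℕ, (f ^ (k % S.card)) x0 = (f ^ k) x0 := by
    intro k
    rw [hcyc.pow_apply_eq_pow_apply (Finset.mem_univ _), hcard]
    exact Nat.mod_modEq _ _
  have hg : ∀ k : ℕ, ∀ i : ZMod S.card, (f ^ (i + (k : ZMod S.card)).val) x0
      = (f ^ k) ((f ^ i.val) x0) := by
    intro k i
    rw [← Perm.mul_apply, ← pow_add, ZMod.val_add, hdvd, ZMod.val_natCast, pow_add,
      Perm.mul_apply, hdvd, ← Perm.mul_apply, ← pow_add, Nat.add_comm k]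
  have hfj : ∀ k : ℕ, ∀ hk : k < m + 1, ∀ w : S, ((f ^ k) w).1 0 = w.1 ⟨k, hk⟩ := by
    intro k
    induction k with
    | zero => intro hk w; rfl
    | succ k ih =>
      intro hk w
      rw [pow_succ, Perm.mul_apply, ih (by omega)]
      exact hf w ⟨k, by omega⟩
  refine ⟨fun i => ((f ^ i.val) x0).1 0, ?_⟩
  have hfun : (fun i : ZMod S.card => fun j : Fin (m+1) =>
      ((f ^ (i + (j.val : ZMod S.card)).val) x0).1 0) = fun i => ((f ^ i.val) x0).1 := by
    funext i j
    rw [hg, hfj _ j.2]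
  show Set.BijOn (fun i : ZMod S.card => fun j : Fin (m+1) =>
      ((f ^ (i + (j.val : ZMod S.card)).val) x0).1 0) Set.univ ↑S
  rw [hfun]
  refine ⟨fun i _ => ((f ^ i.val) x0).2, ?_, ?_⟩
  · intro i _ j _ hij
    have := Subtype.ext hij
    rw [hcyc.pow_apply_eq_pow_apply (Finset.mem_univ _), hcard] at this
    apply ZMod.val_injective
    exact Nat.ModEq.eq_of_lt_of_lt this (ZMod.val_lt _) (ZMod.val_lt _)
  · intro y hy
    obtain ⟨k, hk, hk'⟩ := hcyc.exists_pow_eq (Finset.mem_univ x0) (Finset.mem_univ ⟨y, hy⟩)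
    refine ⟨(k : ZMod S.card), trivial, ?_⟩
    simp only
    rw [ZMod.val_natCast, hdvd, hk']

/-- competition ranking -/
def UcR {n : ℕ} (w : Fin n → Fin n) : Prop :=
  ∀ j : Fin n, (w j).val = (Finset.univ.filter fun i => w i < w j).card

theorem uc_inj_card {n : ℕ} (w : Fin n → Fin n) (hw : Function.Injective w) (v : Fin n) :
    (Finset.univ.filter fun i => w i < v).card = v.val := by
  have hb := Finite.injective_iff_bijective.1 hw
  rw [← Fin.card_Iio v]
  apply Finset.card_bijective w hb
  simp

theorem uc_inj {n : ℕ} (w : Fin n → Fin n) (hw : Function.Injective w) : UcR w :=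
  fun j => (uc_inj_card w hw _).symm

theorem uc_rot {m : ℕ} (w : Fin (m+1) → Fin (m+1)) (hw : UcR w) : UcR (fun j => w (j+1)) := by
  intro j
  rw [hw (j+1)]
  symm
  apply Finset.card_bijective (fun i => i + 1) (Equiv.addRight (1 : Fin (m+1))).bijective
  simp

/-- splitting a tie -/
theorem uc_split {n : ℕ} (w : Fin n → Fin n) (hw : UcR w) (a b : Fin n) (hab : a ≠ b)
    (h : w a = w b) : ∃ v, w a < v ∧ UcR (Function.update w a v) := by
  have hdis : (Finset.univ.filter fun i => w i ≤ w a).card =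
      (w a).val + (Finset.univ.filter fun i => w i = w a).card := by
    rw [hw a, ← Finset.card_union_of_disjoint]
    · congr 1; ext i; simp [le_iff_lt_or_eq]
    · rw [Finset.disjoint_filter]; intro i _ h1 h2; exact absurd h2 h1.ne
  have h2 : 1 < (Finset.univ.filter fun i => w i = w a).card :=
    Finset.one_lt_card.2 ⟨a, by simp, b, by simp [h], hab⟩
  have hle : (Finset.univ.filter fun i => w i ≤ w a).card ≤ n := by
    simpa using Finset.card_le_univ (Finset.univ.filter fun i => w i ≤ w a)
  set L := (Finset.univ.filter fun i => w i ≤ w a).card with hL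
  have hgap : ∀ i, w a < w i → L ≤ (w i).val := by
    intro i hi
    rw [hw i]
    apply Finset.card_le_card
    intro x hx
    simp only [Finset.mem_filter, Finset.mem_univ, true_and] at hx ⊢
    exact hx.trans_lt hi
  have hlow : ∀ i, ¬ w a < w i → (w i).val ≤ (w a).val := fun i hi => by
    simpa using hi
  refine ⟨⟨L - 1, by omega⟩, by rw [Fin.lt_def]; simp only; omega, ?_⟩
  intro j
  by_cases hj : j = a
  · subst hj
    simp only [Function.update_self]
    have : (Finset.univ.filter fun i => Function.update w j ⟨L - 1, by omega⟩ i <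
        (⟨L - 1, by omega⟩ : Fin n)) = (Finset.univ.filter fun i => w i ≤ w j).erase j := by
      ext i
      simp only [Finset.mem_filter, Finset.mem_univ, true_and, Finset.mem_erase]
      by_cases hi : i = j
      · subst hi; simp
      · rw [Function.update_of_ne hi, Fin.lt_def, Fin.le_def]
        by_cases h3 : w j < w i
        · have := hgap i h3; rw [Fin.lt_def] at h3; simp only; omega
        · have := hlow i h3; simp only [hi, ne_eq, not_false_eq_true, true_and]; omega
    rw [this, Finset.card_erase_of_mem (by simp)]
  · rw [Function.update_of_ne hj, hw j]
    congr 1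
    ext i
    simp only [Finset.mem_filter, Finset.mem_univ, true_and]
    by_cases hi : i = a
    · subst hi
      rw [Function.update_self]
      by_cases h3 : w i < w j
      · have := hgap j h3
        simp only [h3, true_iff, Fin.lt_def]; omega
      · have := hlow j h3
        simp only [h3, false_iff, Fin.lt_def]; omega
    · rw [Function.update_of_ne hi]

theorem uc_merge {n : ℕ} (w : Fin n → Fin n) (hw : Function.Injective w) (a b : Fin n)
    (h : (w b).val = (w a).val + 1) : UcR (Function.update w b (w a)) := by
  intro j
  rw [← uc_inj_card w hw]
  congr 1
  ext i
  simp only [Finset.mem_filter, Finset.mem_univ, true_and]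
  have hj : j ≠ b → (w j).val ≠ (w b).val := fun h1 h2 => h1 (hw (Fin.ext h2))
  by_cases hi : i = b
  · subst hi
    rw [Function.update_self]
    by_cases h1 : j = i
    · subst h1; rw [Function.update_self]; simp only [Fin.lt_def]; omega
    · have := hj h1
      rw [Function.update_of_ne h1]; simp only [Fin.lt_def]; omega
  · rw [Function.update_of_ne hi]

theorem uc_conn {m : ℕ} (T : Set (Fin (m+1) → Fin (m+1)))
    (hT : ∀ w, UcR w → ∀ w', UcR w' → ∀ a, (∀ i, i ≠ a → w i = w' i) → w ∈ T → w' ∈ T) :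
    ∀ x, UcR x → ∀ y, UcR y → x ∈ T → y ∈ T := by
  have hT' : ∀ w, UcR w → ∀ w', UcR w' → ∀ a, (∀ i, i ≠ a → w i = w' i) → (w ∈ T ↔ w' ∈ T) :=
    fun w hw w' hw' a h =>
      ⟨hT w hw w' hw' a h, hT w' hw' w hw a (fun i hi => (h i hi).symm)⟩
  have hstep : ∀ (i : Fin m) (w : Fin (m+1) → Fin (m+1)), Function.Injective w →
      (w ∈ T ↔ (Equiv.swap i.castSucc i.succ ∘ w) ∈ T) := by
    intro i w hw
    have hs := (Finite.injective_iff_bijective.1 hw).2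
    obtain ⟨a, ha⟩ := hs i.castSucc
    obtain ⟨b, hb⟩ := hs i.succ
    have hm := uc_merge w hw a b (by simp [ha, hb])
    have hw' : Function.Injective (Equiv.swap i.castSucc i.succ ∘ w) :=
      (Equiv.injective _).comp hw
    rw [hT' w (uc_inj w hw) _ hm b (fun i hi => by rw [Function.update_of_ne hi])]
    apply hT' _ hm _ (uc_inj _ hw') a
    intro j hj
    by_cases hjb : j = b
    · subst hjb; simp [ha, hb]
    · rw [Function.update_of_ne hjb, Function.comp_apply, Equiv.swap_apply_of_ne_of_ne]
      · rw [← ha]; exact fun h => hj (hw h)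
      · rw [← hb]; exact fun h => hjb (hw h)
  have hperm : ∀ σ : Equiv.Perm (Fin (m+1)), ∀ w : Fin (m+1) → Fin (m+1),
      Function.Injective w → (w ∈ T ↔ (σ ∘ w) ∈ T) := by
    intro σ
    have hσ : σ ∈ Submonoid.closure (Set.range fun i : Fin m ↦ Equiv.swap i.castSucc i.succ) := by
      rw [Equiv.Perm.mclosure_swap_castSucc_succ]; trivial
    induction hσ using Submonoid.closure_induction with
    | mem s hs => obtain ⟨i, rfl⟩ := hs; exact hstep i
    | one => intro w _; rfl
    | mul s t _ _ h1 h2 =>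
      intro w hw
      rw [h2 w hw, h1 _ (t.injective.comp hw)]
      rfl
  have hid : ∀ w, UcR w → (w ∈ T ↔ (id : Fin (m+1) → Fin (m+1)) ∈ T) := by
    have : ∀ k : ℕ, ∀ w : Fin (m+1) → Fin (m+1), UcR w →
        (m+1) * (m+1) - ∑ i, (w i).val = k → (w ∈ T ↔ (id : Fin (m+1) → Fin (m+1)) ∈ T) := by
      intro k
      induction k using Nat.strong_induction_on with
      | _ k ih =>
      intro w hw hk
      by_cases hinj : Function.Injective w
      · have := hperm (Equiv.ofBijective w (Finite.injective_iff_bijective.1 hinj)) id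
          Function.injective_id
        exact this.symm
      · simp only [Function.Injective, not_forall] at hinj
        obtain ⟨a, b, hab, hne⟩ := hinj
        obtain ⟨v, hv, hR⟩ := uc_split w hw a b hne hab
        rw [hT' w hw _ hR a (fun i hi => by rw [Function.update_of_ne hi])]
        refine ih _ ?_ _ hR rfl
        have h1 : ∑ i, (w i).val < ∑ i, (Function.update w a v i).val := by
          apply Finset.sum_lt_sum
          · intro i _
            by_cases hi : i = a
            · subst hi; rw [Function.update_self]; exact hv.le
            · rw [Function.update_of_ne hi]
          · exact ⟨a, Finset.mem_univ _, by rw [Function.update_self]; exact hv⟩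
        have h2 : ∑ i, (Function.update w a v i).val ≤ (m+1) * (m+1) := by
          calc _ ≤ ∑ i : Fin (m+1), (m+1) := Finset.sum_le_sum fun i _ => by omega
            _ = _ := by simp
        omega
    exact fun w hw => this _ w hw rfl
  intro x hx y hy h
  exact (hid y hy).2 ((hid x hx).1 h)

/-- For `n ≥ 2`, a U-cycle of competition rankings of `n` players exists: words
`w : Fin n → Fin n` such that each player's (0-based) rank equals the number of
players ranked strictly better. -/
theorem ucycle_competition_rankings (n : ℕ) (hn : 2 ≤ n) :
    HasUCycle (wordsOf (fun w : Fin n → Fin n =>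
      ∀ j : Fin n, (w j).val = (Finset.univ.filter fun i => w i < w j).card)) := by
  obtain ⟨m, rfl⟩ : ∃ m, n = m + 1 := ⟨n - 1, by omega⟩
  have hmem : ∀ w : Fin (m+1) → Fin (m+1), w ∈ (wordsOf (fun w : Fin (m+1) → Fin (m+1) =>
      ∀ j, (w j).val = (Finset.univ.filter fun i => w i < w j).card)) ↔ UcR w := by
    intro w
    simp [wordsOf, UcR]
  apply uc_main
  · exact ⟨id, (hmem _).2 (uc_inj _ Function.injective_id)⟩
  · intro w hw
    exact (hmem _).2 (uc_rot w ((hmem w).1 hw))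
  · intro T hT x hx y hy hxT
    exact uc_conn T (fun w hw w' hw' => hT w ((hmem w).2 hw) w' ((hmem w').2 hw'))
      x ((hmem x).1 hx) y ((hmem y).1 hy) hxT
end
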